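/- There exists a constant C > 0 such that for every z = (b,w,v,M,q) ∈ 𝒰 there exists (b̄,w̄,v̄,M̄) ∈ ℝ×ℝ²×ℝ²×𝕊₀² satisfying: (i) (b̄,w̄,v̄,M̄,0) ∈ Λ; (ii) the line segment with endpoints z − (b̄,w̄,v̄,M̄,0) and z + (b̄,w̄,v̄,M̄,0) is contained in 𝒰; (iii) √(|v̄|² + b̄²) ≥ C (2 − (|v|² + b²)). -/

import Mathlib

/-!
The proof rests on the fact that the difference of any two points of `K` (with `q = 0`) lies in the
wave cone (`emb8_sub_mem_Lambda8`).

Given `z ∈ 𝒰`, Carathéodory's theorem writes its first seven coordinates as `∑ λᵢ xᵢ` with at most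
eight points `xᵢ ∈ K`. Let `i₀` maximize `λᵢ`, write `p` for the `(v, b)`-part of a state, and let
`j` maximize `λⱼ |p(xⱼ) - p(x_{i₀})|`. The direction is `½ λⱼ (xⱼ - x_{i₀})`. Doubling it still
keeps `z ± ·` in the convex hull, because only the weights of `xⱼ` and `x_{i₀}` change and they stay
nonnegative as `λⱼ ≤ λ_{i₀}`; the halved points are midpoints between the interior point `z` and
points of the convex set, hence interior. As for the size,
`|p(z) - p(x_{i₀})| ≤ ∑ λᵢ |p(xᵢ) - p(x_{i₀})| ≤ 8 λⱼ |p(xⱼ) - p(x_{i₀})|`, while `|p(x_{i₀})|² = 2`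
yields `2 - |p(z)|² ≤ 4 |p(z) - p(x_{i₀})|`. This gives `C = 1/64`.
-/

open Matrix

noncomputable section

/-- The 4×3 matrix `V(z)` associated to a state `z = (b, w, v, M, q)`, flattened into `ℝ⁸` as
`z = (b, w₁, w₂, v₁, v₂, M₁₁, M₁₂, q)` with `M = ![![M₁₁, M₁₂], ![M₁₂, −M₁₁]] ∈ 𝕊₀²`:
first two rows `(M + q I₂ | v)`, third row `(vᵀ | 0)`, fourth row `(wᵀ | b)`. -/
def Vmat8 (z : Fin 8 → ℝ) : Matrix (Fin 4) (Fin 3) ℝ :=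
  ![![z 5 + z 7, z 6, z 3],
    ![z 6, -z 5 + z 7, z 4],
    ![z 3, z 4, 0],
    ![z 1, z 2, z 0]]

/-- The wave cone `Λ`. -/
def Lambda8 : Set (Fin 8 → ℝ) :=
  {z | ∃ ξ : Fin 3 → ℝ, ξ ≠ 0 ∧ Vmat8 z *ᵥ ξ = 0}

/-- The constraint set `K ⊂ ℝ × ℝ² × ℝ² × 𝕊₀² ≅ ℝ⁷`, a state being flattened as
`h = (b, w₁, w₂, v₁, v₂, M₁₁, M₁₂)`: `|b| = 1`, `|v| = 1`, `M = v ⊗ v − (1/2) I₂`, `w = b v`. -/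
def K7 : Set (Fin 7 → ℝ) :=
  {h | |h 0| = 1 ∧ (h 3) ^ 2 + (h 4) ^ 2 = 1 ∧
    h 5 = (h 3) ^ 2 - 1 / 2 ∧ h 6 = h 3 * h 4 ∧
    h 1 = h 0 * h 3 ∧ h 2 = h 0 * h 4}

/-- The relaxed set `𝒰 = int (K^co × [−1,1]) ⊂ ℝ⁸`. -/
def U8 : Set (Fin 8 → ℝ) :=
  interior {z | (fun i : Fin 7 => z i.castSucc) ∈ convexHull ℝ K7 ∧
    z 7 ∈ Set.Icc (-1 : ℝ) 1}

/-- The product set `K^co × [−1,1]` whose interior is `𝒰`. -/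
def S8 : Set (Fin 8 → ℝ) :=
  {z | (fun i : Fin 7 => z i.castSucc) ∈ convexHull ℝ K7 ∧ z 7 ∈ Set.Icc (-1 : ℝ) 1}

/-- A state in `ℝ⁷`, viewed in `ℝ⁸` with `q = 0`. -/
def emb8 (h : Fin 7 → ℝ) : Fin 8 → ℝ := Fin.snoc (α := fun _ => ℝ) h 0

/-- The `(v, b)`-part of a state `(b, w, v, M)`, as a vector of Euclidean 3-space. -/
def vbPart : (Fin 7 → ℝ) →ₗ[ℝ] EuclideanSpace ℝ (Fin 3) where
  toFun h := !₂[h 3, h 4, h 0]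
  map_add' x y := by ext i; fin_cases i <;> simp
  map_smul' c x := by ext i; fin_cases i <;> simp

lemma emb8_castSucc (h : Fin 7 → ℝ) (i : Fin 7) : emb8 h i.castSucc = h i := by
  simp [emb8]

lemma emb8_seven (h : Fin 7 → ℝ) : emb8 h 7 = 0 := by
  have : (7 : Fin 8) = Fin.last 7 := rfl
  rw [this, emb8, Fin.snoc_last]

lemma convex_S8 : Convex ℝ S8 := by
  have h1 : Convex ℝ ((LinearMap.funLeft ℝ ℝ (Fin.castSucc : Fin 7 → Fin 8)) ⁻¹'
      (convexHull ℝ K7)) := (convex_convexHull ℝ K7).linear_preimage _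
  have h2 : Convex ℝ ((LinearMap.proj (R := ℝ) (φ := fun _ : Fin 8 => ℝ) 7) ⁻¹'
      (Set.Icc (-1 : ℝ) 1)) := (convex_Icc _ _).linear_preimage _
  exact h1.inter h2

lemma norm_vbPart_sq (h : Fin 7 → ℝ) : ‖vbPart h‖ ^ 2 = h 3 ^ 2 + h 4 ^ 2 + h 0 ^ 2 := by
  simp [vbPart, EuclideanSpace.norm_sq_eq, Fin.sum_univ_three]

lemma norm_vbPart_sq_of_mem_K7 {h : Fin 7 → ℝ} (hh : h ∈ K7) : ‖vbPart h‖ ^ 2 = 2 := by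
  obtain ⟨h0, h1, -⟩ := hh
  rw [norm_vbPart_sq, ← sq_abs (h 0), h0, h1]; norm_num

/-- Differences of points of `K` lie in the wave cone: with `ξ'` orthogonal to `v₁ - v₂`, the vector
`ξ = (ξ', -v₁·ξ')` satisfies `vᵢ·ξ' + ξ₃ = 0` for both points, so the momentum rows (taken with
`q = 1/2` at both points, which cancels) and the `(w | b)` row vanish at each of them, and the row
`(v₁ - v₂ | 0)` vanishes by orthogonality. -/
lemma emb8_sub_mem_Lambda8 {x y : Fin 7 → ℝ} (hx : x ∈ K7) (hy : y ∈ K7) (c : ℝ) :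
    emb8 (c • (x - y)) ∈ Lambda8 := by
  obtain ⟨-, hx1, hx5, hx6, hxw1, hxw2⟩ := hx
  obtain ⟨-, hy1, hy5, hy6, hyw1, hyw2⟩ := hy
  -- A nonzero vector `(a, d)` orthogonal to `v₁ - v₂`, chosen arbitrarily if `v₁ = v₂`.
  obtain ⟨a, d, hne, horth⟩ : ∃ a d : ℝ, (a ≠ 0 ∨ d ≠ 0) ∧
      (x 3 - y 3) * a + (x 4 - y 4) * d = 0 := by
    by_cases h : x 3 - y 3 = 0
    · exact ⟨1, 0, by simp, by simp [h]⟩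
    · exact ⟨-(x 4 - y 4), x 3 - y 3, Or.inr h, by ring⟩
  refine ⟨![a, d, -(x 3 * a + x 4 * d)], ?_, ?_⟩
  · intro h
    rcases hne with h' | h'
    · exact h' (by simpa using congrFun h 0)
    · exact h' (by simpa using congrFun h 1)
  · set u := emb8 (c • (x - y)) with hu
    have e (i : Fin 7) : u i.castSucc = c * (x i - y i) := by
      simp [hu, emb8_castSucc]
    have e0 : u 0 = c * (x 0 - y 0) := e 0
    have e1 : u 1 = c * (x 1 - y 1) := e 1
    have e2 : u 2 = c * (x 2 - y 2) := e 2
    have e3 : u 3 = c * (x 3 - y 3) := e 3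
    have e4 : u 4 = c * (x 4 - y 4) := e 4
    have e5 : u 5 = c * (x 5 - y 5) := e 5
    have e6 : u 6 = c * (x 6 - y 6) := e 6
    have e7 : u 7 = 0 := emb8_seven _
    ext i
    fin_cases i
    · simp [Vmat8, mulVec, dotProduct, Fin.sum_univ_three, e3, e5, e6, e7]
      rw [hx5, hy5, hx6, hy6]
      linear_combination (c * y 3) * horth
    · simp [Vmat8, mulVec, dotProduct, Fin.sum_univ_three, e4, e5, e6, e7]
      rw [hx5, hy5, hx6, hy6]
      linear_combination (c * y 4) * horth - c * d * hx1 + c * d * hy1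
    · simp [Vmat8, mulVec, dotProduct, Fin.sum_univ_three, e3, e4]
      linear_combination c * horth
    · simp [Vmat8, mulVec, dotProduct, Fin.sum_univ_three, e0, e1, e2]
      rw [hxw1, hyw1, hxw2, hyw2]
      linear_combination (c * y 0) * horth

/-- Transferring the mass `w j` from `x i₀` to `x j` or back keeps a convex combination in the
hull, provided `w j ≤ w i₀`. -/
lemma shift_mem_convexHull {E ι : Type*} [AddCommGroup E] [Module ℝ E] [Fintype ι] {K : Set E}
    {x : ι → E} {w : ι → ℝ} (hx : ∀ i, x i ∈ K) (hw : ∀ i, 0 ≤ w i) (hw1 : ∑ i, w i = 1)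
    {i₀ j : ι} (hj : w j ≤ w i₀) {s : ℝ} (hs : s = 1 ∨ s = -1) :
    ∑ i, w i • x i + s • w j • (x j - x i₀) ∈ convexHull ℝ K := by
  classical
  let w' : ι → ℝ := fun i =>
    w i + s * w j * ((if i = j then 1 else 0) - (if i = i₀ then 1 else 0))
  have key : ∑ i, w i • x i + s • w j • (x j - x i₀) = ∑ i, w' i • x i := by
    simp only [w', add_smul, Finset.sum_add_distrib, mul_smul, sub_smul, ← Finset.smul_sum,
      Finset.sum_sub_distrib, ite_smul, one_smul, zero_smul, Finset.sum_ite_eq', Finset.mem_univ,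
      if_true]
  rw [key]
  refine (convex_convexHull ℝ K).sum_mem (fun i _ => ?_) ?_ (fun i _ => subset_convexHull ℝ K (hx i))
  · have h1 := hw i
    have h2 := hw j
    simp only [w']
    rcases hs with rfl | rfl <;> split_ifs <;> subst_vars <;> linarith
  · simp [w', Finset.sum_add_distrib, ← Finset.mul_sum, Finset.sum_sub_distrib, hw1]

/-- There is `C > 0` such that every state `z = (b,w,v,M,q) ∈ 𝒰` admits a
direction `z̄ = (b̄,w̄,v̄,M̄,0) ∈ Λ` such that the segment with endpoints `z ± z̄` lies in `𝒰`
and `√(|v̄|² + b̄²) ≥ C (2 − (|v|² + b²))`. -/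
theorem stmt_4 :
    ∃ C : ℝ, 0 < C ∧ ∀ z ∈ U8, ∃ zb : Fin 8 → ℝ,
      zb 7 = 0 ∧
      zb ∈ Lambda8 ∧
      segment ℝ (z - zb) (z + zb) ⊆ U8 ∧
      Real.sqrt ((zb 3) ^ 2 + (zb 4) ^ 2 + (zb 0) ^ 2) ≥
        C * (2 - ((z 3) ^ 2 + (z 4) ^ 2 + (z 0) ^ 2)) := by
  refine ⟨1 / 64, by norm_num, fun z hz => ?_⟩
  have hzS : z ∈ interior S8 := hz
  obtain ⟨hzK, hz7⟩ : z ∈ S8 := interior_subset hzS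
  set h : Fin 7 → ℝ := fun i => z i.castSucc with hh
  obtain ⟨ι, _, x, w, hxK, hind, hwpos, hw1, hsum⟩ :=
    eq_pos_convex_span_of_mem_convexHull hzK
  have hxK' : ∀ i, x i ∈ K7 := fun i => hxK ⟨i, rfl⟩
  have hcard : (Fintype.card ι : ℝ) ≤ 8 := by
    have h1 := hind.card_le_finrank_succ
    have h2 := Submodule.finrank_le (vectorSpan ℝ (Set.range x))
    rw [Module.finrank_fin_fun] at h2
    exact_mod_cast (by omega : Fintype.card ι ≤ 8)
  have hne : Nonempty ι := by
    by_contra hcon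
    rw [not_nonempty_iff] at hcon
    simp at hw1
  obtain ⟨i₀, hi₀⟩ := Finite.exists_max w
  obtain ⟨j, hj⟩ := Finite.exists_max fun i => w i * ‖vbPart (x i) - vbPart (x i₀)‖
  set g : Fin 7 → ℝ := (w j / 2) • (x j - x i₀) with hg
  have hshift : ∀ s : ℝ, s = 1 ∨ s = -1 → z + s • emb8 g ∈ interior S8 := by
    intro s hs
    have hmem : z + s • (2 : ℝ) • emb8 g ∈ S8 := by
      refine ⟨?_, ?_⟩
      · convert shift_mem_convexHull hxK' (fun i => (hwpos i).le) hw1 (hi₀ j) hs using 1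
        rw [hsum]
        ext i
        simp only [Pi.add_apply, Pi.smul_apply, emb8_castSucc, hg, hh, smul_eq_mul, Pi.sub_apply]
        ring
      · simpa [emb8_seven] using hz7
    have := convex_S8.combo_interior_self_mem_interior hzS hmem
      (a := 1 / 2) (b := 1 / 2) (by norm_num) (by norm_num) (by norm_num)
    convert this using 1
    module
  refine ⟨emb8 g, emb8_seven _, emb8_sub_mem_Lambda8 (hxK' j) (hxK' i₀) _, ?_, ?_⟩
  · refine convex_S8.interior.segment_subset ?_ ?_
    · simpa [sub_eq_add_neg] using hshift (-1) (Or.inr rfl)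
    · simpa using hshift 1 (Or.inl rfl)
  · have e1 : emb8 g 3 ^ 2 + emb8 g 4 ^ 2 + emb8 g 0 ^ 2 = ‖vbPart g‖ ^ 2 := by
      rw [norm_vbPart_sq, ← emb8_castSucc g 3, ← emb8_castSucc g 4, ← emb8_castSucc g 0]
      rfl
    have e2 : z 3 ^ 2 + z 4 ^ 2 + z 0 ^ 2 = ‖vbPart h‖ ^ 2 := by
      rw [norm_vbPart_sq]
      rfl
    rw [e1, e2, Real.sqrt_sq (norm_nonneg _)]
    set p := vbPart h with hp
    set p₁ := vbPart (x i₀) with hp₁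
    have hp₁sq : ‖p₁‖ ^ 2 = 2 := norm_vbPart_sq_of_mem_K7 (hxK' i₀)
    have hgn : ‖vbPart g‖ = w j * ‖vbPart (x j) - p₁‖ / 2 := by
      rw [hg, map_smul, map_sub, norm_smul, Real.norm_of_nonneg (by linarith [hwpos j])]
      ring
    have hdist : ‖p - p₁‖ ≤ 8 * (w j * ‖vbPart (x j) - p₁‖) := by
      have e : p - p₁ = ∑ i, w i • (vbPart (x i) - p₁) := by
        simp only [smul_sub, Finset.sum_sub_distrib, ← Finset.sum_smul, hw1, one_smul]
        rw [hp, ← hsum, map_sum]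
        simp only [map_smul]
      calc ‖p - p₁‖ ≤ ∑ i, ‖w i • (vbPart (x i) - p₁)‖ := e ▸ norm_sum_le _ _
        _ ≤ ∑ _i : ι, w j * ‖vbPart (x j) - p₁‖ := by
            refine Finset.sum_le_sum fun i _ => ?_
            rw [norm_smul, Real.norm_of_nonneg (hwpos i).le]
            exact hj i
        _ = Fintype.card ι * (w j * ‖vbPart (x j) - p₁‖) := by simp
        _ ≤ 8 * (w j * ‖vbPart (x j) - p₁‖) :=
            mul_le_mul_of_nonneg_right hcard (mul_nonneg (hwpos j).le (norm_nonneg _))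
    -- `|p₁|² - |p|² = (|p₁| - |p|)(|p₁| + |p|)`, where in the nontrivial case `|p| ≤ |p₁| ≤ 2`.
    have hdef : 2 - ‖p‖ ^ 2 ≤ 4 * ‖p - p₁‖ := by
      have h1 : ‖p₁‖ ≤ 2 := by nlinarith [norm_nonneg p₁]
      have h2 : ‖p₁‖ ≤ ‖p‖ + ‖p - p₁‖ := by
        have := norm_sub_le p (p - p₁)
        rwa [sub_sub_cancel] at this
      rcases le_total ‖p₁‖ ‖p‖ with h3 | h3
      · nlinarith [norm_nonneg p₁, norm_nonneg (p - p₁)]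
      · nlinarith [norm_nonneg p, norm_nonneg (p - p₁)]
    rw [hgn]
    linarith
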